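/- arXiv:1712.03090 — 8 statements merged into one kernel-verified Lean document; each statement's English description precedes it below -/
import Mathlib

section
/- Let R, P_c, T_c > 0 and m ≥ 0, and let a(T) = 0.45724·(R²T_c²/P_c)·(1 + m(1 − √(T/T_c)))² for T > 0. Then for every T > 0 with 1 + m(1 − √(T/T_c)) ≠ 0, the second derivative of a satisfies a''(T) = (m·a(T)/(2T·√(T·T_c)))·(1 + m)/(1 + m(1 − √(T/T_c)))². -/
/-- Peng–Robinson energy parameter: second derivative formula
`a''(T) = (m·a(T)/(2T·√(T·T_c)))·(1 + m)/(1 + m(1 − √(T/T_c)))²` for `T > 0`. -/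
theorem pr_energy_param_second_deriv
    (R Pc Tc m : ℝ) (hR : 0 < R) (hPc : 0 < Pc) (hTc : 0 < Tc) (hm : 0 ≤ m)
    (a : ℝ → ℝ)
    (ha : ∀ T : ℝ, 0 < T →
      a T = 0.45724 * (R ^ 2 * Tc ^ 2 / Pc) * (1 + m * (1 - Real.sqrt (T / Tc))) ^ 2)
    (T : ℝ) (hT : 0 < T) (hden : 1 + m * (1 - Real.sqrt (T / Tc)) ≠ 0) :
    deriv (deriv a) T =
      (m * a T / (2 * T * Real.sqrt (T * Tc))) *
        ((1 + m) / (1 + m * (1 - Real.sqrt (T / Tc))) ^ 2) := by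
  obtain ⟨K, hK⟩ : ∃ K : ℝ, K = 0.45724 * (R ^ 2 * Tc ^ 2 / Pc) := ⟨_, rfl⟩
  rw [← hK] at ha
  have hs : ∀ x : ℝ, 0 < x →
      HasDerivAt (fun y => Real.sqrt (y / Tc)) (1 / Tc / (2 * Real.sqrt (x / Tc))) x := by
    intro x hx
    exact ((hasDerivAt_id x).div_const Tc).sqrt (div_pos hx hTc).ne'
  have h1 : ∀ x : ℝ, 0 < x →
      deriv a x = -K * m / Tc * ((1 + m) * (Real.sqrt (x / Tc))⁻¹ - m) := by
    intro x hx
    have hp : 0 < Real.sqrt (x / Tc) := Real.sqrt_pos.mpr (div_pos hx hTc)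
    have h := ((((((hs x hx).const_sub 1).const_mul m).const_add 1).pow 2).const_mul K)
    have he : a =ᶠ[nhds x] fun y => K * (1 + m * (1 - Real.sqrt (y / Tc))) ^ 2 := by
      filter_upwards [lt_mem_nhds hx] with y hy using ha y hy
    rw [(h.congr_of_eventuallyEq he).deriv]
    field_simp
    ring
  have hp : 0 < Real.sqrt (T / Tc) := Real.sqrt_pos.mpr (div_pos hT hTc)
  have h2 : deriv a =ᶠ[nhds T]
      fun x => -K * m / Tc * ((1 + m) * (Real.sqrt (x / Tc))⁻¹ - m) := by
    filter_upwards [lt_mem_nhds hT] with y hy using h1 y hy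
  have h := ((((hs T hT).inv hp.ne').const_mul (1 + m)).sub_const m).const_mul (-K * m / Tc)
  rw [(h.congr_of_eventuallyEq h2).deriv, ha T hT]
  have e1 : Real.sqrt (T * Tc) = Real.sqrt (T / Tc) * Tc := by
    rw [show T * Tc = T / Tc * Tc ^ 2 by field_simp, Real.sqrt_mul (div_pos hT hTc).le,
      Real.sqrt_sq hTc.le]
  have e2 : T = Real.sqrt (T / Tc) ^ 2 * Tc := by
    rw [Real.sq_sqrt (div_pos hT hTc).le]; field_simp
  rw [e1]
  generalize Real.sqrt (T / Tc) = s at *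
  subst e2
  field_simp
end

section
/- Let R, P_c, T_c > 0 and m ≥ 0, and let a(T) = 0.45724·(R²T_c²/P_c)·(1 + m(1 − √(T/T_c)))² for T > 0. Then a''(T) ≥ 0 for every T > 0; in particular, a is a convex function on the interval (0, ∞). -/
/-- Peng–Robinson energy parameter: `a'' ≥ 0` on `(0, ∞)`; in particular `a` is
convex on `(0, ∞)`. -/
theorem pr_energy_param_convex
    (R Pc Tc m : ℝ) (hR : 0 < R) (hPc : 0 < Pc) (hTc : 0 < Tc) (hm : 0 ≤ m)
    (a : ℝ → ℝ)
    (ha : ∀ T : ℝ, 0 < T →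
      a T = 0.45724 * (R ^ 2 * Tc ^ 2 / Pc) * (1 + m * (1 - Real.sqrt (T / Tc))) ^ 2) :
    (∀ T : ℝ, 0 < T → 0 ≤ deriv (deriv a) T) ∧ ConvexOn ℝ (Set.Ioi (0 : ℝ)) a := by
  have hC : 0 ≤ 0.45724 * (R ^ 2 * Tc ^ 2 / Pc) := by positivity
  generalize 0.45724 * (R ^ 2 * Tc ^ 2 / Pc) = C at ha hC
  obtain ⟨A, B, D, hB, hf⟩ : ∃ A B D : ℝ, 0 ≤ B ∧
      ∀ T : ℝ, 0 < T → a T = A - B * Real.sqrt T + D * T := by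
    refine ⟨C * (1 + m) ^ 2, 2 * C * (1 + m) * m / Real.sqrt Tc, C * m ^ 2 / Tc,
      by positivity, ?_⟩
    intro T hT
    have hs : 0 < Real.sqrt Tc := Real.sqrt_pos.2 hTc
    have h1 : Real.sqrt Tc ^ 2 = Tc := Real.sq_sqrt hTc.le
    have h2 : Real.sqrt T ^ 2 = T := Real.sq_sqrt hT.le
    rw [ha T hT, Real.sqrt_div hT.le]
    generalize Real.sqrt Tc = s at *
    generalize Real.sqrt T = t at *
    subst h1 h2
    field_simp
    ring
  have d1 : ∀ T : ℝ, 0 < T → HasDerivAt a (D - B * (1 / (2 * Real.sqrt T))) T := by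
    intro T hT
    have h : HasDerivAt (fun T : ℝ => A - B * Real.sqrt T + D * T)
        (-(B * (1 / (2 * Real.sqrt T))) + D * 1) T :=
      (((Real.hasDerivAt_sqrt hT.ne').const_mul B).const_sub A).add
        ((hasDerivAt_id' T).const_mul D)
    have h' := h.congr_of_eventuallyEq (f₁ := a)
      (Filter.eventually_of_mem (Ioi_mem_nhds hT) fun x hx => hf x hx)
    exact h'.congr_deriv (by ring)
  have d2 : ∀ T : ℝ, 0 < T → HasDerivAt (deriv a)
      (B / 2 * ((1 / (2 * Real.sqrt T)) / Real.sqrt T ^ 2)) T := by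
    intro T hT
    have hs : 0 < Real.sqrt T := Real.sqrt_pos.2 hT
    have h := (((Real.hasDerivAt_sqrt hT.ne').inv hs.ne').const_mul (B / 2)).const_sub D
    have h' := h.congr_of_eventuallyEq (f₁ := deriv a)
      (Filter.eventually_of_mem (Ioi_mem_nhds hT) fun x hx => by
        rw [(d1 x hx).deriv]
        simp only [Pi.inv_apply]
        ring)
    exact h'.congr_deriv (by ring)
  have key : ∀ T : ℝ, 0 < T → 0 ≤ deriv (deriv a) T := by
    intro T hT
    rw [(d2 T hT).deriv]
    positivity
  refine ⟨key, ?_⟩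
  exact convexOn_of_deriv2_nonneg' (convex_Ioi 0)
    (fun x hx => (d1 x hx).differentiableAt.differentiableWithinAt)
    (fun x hx => (d2 x hx).differentiableAt.differentiableWithinAt)
    (fun x hx => key x hx)
end

section
/- Fix a ≥ 0 and b > 0, and let F(n) = (a·n/(2√2·b))·ln((1 + (1 − √2)bn)/(1 + (1 + √2)bn)). Then F is concave on the interval (0, 1/b). -/
/-- First derivative of `n log (1 + c n)`. -/
lemma hasDerivAt_aux1 (c x : ℝ) (h : 1 + c * x ≠ 0) :
    HasDerivAt (fun n : ℝ => n * Real.log (1 + c * n))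
      (Real.log (1 + c * x) + 1 - 1 / (1 + c * x)) x := by
  have h1 : HasDerivAt (fun n : ℝ => 1 + c * n) c x := by
    simpa using ((hasDerivAt_id x).const_mul c).const_add 1
  have h2 := (hasDerivAt_id' x).fun_mul (h1.log h)
  refine h2.congr_deriv ?_
  field_simp
  ring

/-- Second derivative of `n log (1 + c n)`. -/
lemma hasDerivAt_aux2 (c x : ℝ) (h : 1 + c * x ≠ 0) :
    HasDerivAt (fun n : ℝ => Real.log (1 + c * n) + 1 - 1 / (1 + c * n))
      (c * (1 / (1 + c * x) + 1 / (1 + c * x) ^ 2)) x := by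
  have h1 : HasDerivAt (fun n : ℝ => 1 + c * n) c x := by
    simpa using ((hasDerivAt_id x).const_mul c).const_add 1
  have h2 := ((h1.log h).add_const 1).fun_sub (h1.fun_inv h)
  simp only [one_div]
  refine h2.congr_deriv ?_
  field_simp
  ring

/-- For `a ≥ 0`, the attraction contribution
`F(n) = (a·n/(2√2·b))·ln((1 + (1 − √2)bn)/(1 + (1 + √2)bn))` is concave on
`(0, 1/b)`. -/
theorem attraction_contribution_concave
    (a b : ℝ) (ha : 0 ≤ a) (hb : 0 < b)
    (F : ℝ → ℝ)
    (hF : ∀ n : ℝ, F n = (a * n / (2 * Real.sqrt 2 * b)) *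
      Real.log ((1 + (1 - Real.sqrt 2) * b * n) / (1 + (1 + Real.sqrt 2) * b * n))) :
    ConcaveOn ℝ (Set.Ioo (0 : ℝ) (1 / b)) F := by
  have hs : Real.sqrt 2 ^ 2 = 2 := Real.sq_sqrt (by norm_num)
  have hs0 : 0 ≤ Real.sqrt 2 := Real.sqrt_nonneg 2
  have hs1 : 1 < Real.sqrt 2 := by nlinarith
  have hs2 : Real.sqrt 2 < 2 := by nlinarith
  obtain ⟨c, hc⟩ : ∃ c, c = (1 - Real.sqrt 2) * b := ⟨_, rfl⟩
  obtain ⟨d, hd⟩ : ∃ d, d = (1 + Real.sqrt 2) * b := ⟨_, rfl⟩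
  obtain ⟨K, hK⟩ : ∃ K, K = a / (2 * Real.sqrt 2 * b) := ⟨_, rfl⟩
  have hK0 : 0 ≤ K := by rw [hK]; positivity
  have hc0 : c ≤ 0 := by rw [hc]; nlinarith
  have hd0 : 0 ≤ d := by rw [hd]; positivity
  have hp : ∀ x ∈ Set.Ioo (0 : ℝ) (1 / b), 0 < 1 + c * x := by
    rintro x ⟨hx0, hx1⟩
    rw [lt_div_iff₀ hb] at hx1
    have : 0 < x * b := by positivity
    rw [hc]; nlinarith
  have hq : ∀ x ∈ Set.Ioo (0 : ℝ) (1 / b), 0 < 1 + d * x := by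
    rintro x ⟨hx0, hx1⟩
    positivity
  have key : ConcaveOn ℝ (Set.Ioo (0 : ℝ) (1 / b))
      (fun n => K * (n * Real.log (1 + c * n) - n * Real.log (1 + d * n))) := by
    have D1 := fun x hx => ((hasDerivAt_aux1 c x (hp x hx).ne').fun_sub
      (hasDerivAt_aux1 d x (hq x hx).ne')).const_mul K
    have D2 := fun x hx => ((hasDerivAt_aux2 c x (hp x hx).ne').fun_sub
      (hasDerivAt_aux2 d x (hq x hx).ne')).const_mul K
    refine concaveOn_of_hasDerivWithinAt2_nonpos (convex_Ioo _ _)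
      (fun x hx => (D1 x hx).continuousAt.continuousWithinAt)
      (fun x hx => (D1 x (interior_subset hx)).hasDerivWithinAt)
      (fun x hx => (D2 x (interior_subset hx)).hasDerivWithinAt) ?_
    intro x hx
    have hx := interior_subset hx
    have p := hp x hx
    have q := hq x hx
    have e1 : c * (1 / (1 + c * x) + 1 / (1 + c * x) ^ 2) ≤ 0 :=
      mul_nonpos_of_nonpos_of_nonneg hc0 (by positivity)
    have e2 : 0 ≤ d * (1 / (1 + d * x) + 1 / (1 + d * x) ^ 2) := by positivity
    exact mul_nonpos_of_nonneg_of_nonpos hK0 (by linarith)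
  refine key.congr ?_
  intro x hx
  simp only
  rw [hF, ← hc, ← hd, Real.log_div (hp x hx).ne' (hq x hx).ne', hK]
  ring
end

section
/- Let R, P_c, T_c, P₀, T₀ > 0, m ≥ 0, b > 0, ϑ₀ ∈ ℝ, α₀,…,α₃ ∈ ℝ, and fix n > 0 with bn < 1. Assume that ψ_p(T) > R for every T > 0, where ψ_p(T) = ∑_{i=0}^{3} α_i T^i (i.e., the ideal-gas heat capacity at constant volume ψ_v = ψ_p − R is positive). Then the bulk Helmholtz free energy density T ↦ f_b(n,T) (as in the context) is a concave function on the interval (0, ∞). -/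
/-- If the ideal-gas heat capacity satisfies `ψ_p(T) > R` for all `T > 0`, then
the Peng–Robinson bulk Helmholtz free energy density `T ↦ f_b(n,T)` at fixed
molar density `n` (with `0 < bn < 1`) is concave on `(0, ∞)`. -/
theorem bulk_free_energy_concave_in_temperature
    (R Pc Tc P₀ T₀ m b ϑ₀ α₀ α₁ α₂ α₃ n : ℝ)
    (hR : 0 < R) (hPc : 0 < Pc) (hTc : 0 < Tc) (hP₀ : 0 < P₀) (hT₀ : 0 < T₀)
    (hm : 0 ≤ m) (hb : 0 < b) (hn : 0 < n) (hbn : b * n < 1)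
    (ψp : ℝ → ℝ) (hψp : ∀ ξ : ℝ, ψp ξ = α₀ + α₁ * ξ + α₂ * ξ ^ 2 + α₃ * ξ ^ 3)
    (hψpR : ∀ T : ℝ, 0 < T → R < ψp T)
    (a : ℝ → ℝ)
    (ha : ∀ T : ℝ,
      a T = 0.45724 * (R ^ 2 * Tc ^ 2 / Pc) * (1 + m * (1 - Real.sqrt (T / Tc))) ^ 2)
    (G : ℝ → ℝ)
    (hG : ∀ T : ℝ, 0 < T →
      G T = (n * ϑ₀
          + n * (α₀ * (T - T₀) + α₁ * (T ^ 2 - T₀ ^ 2) / 2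
              + α₂ * (T ^ 3 - T₀ ^ 3) / 3 + α₃ * (T ^ 4 - T₀ ^ 4) / 4)
          - n * R * (T - T₀)
          - n * R * T * Real.log (P₀ / (n * R * T))
          - n * T * ∫ ξ in T₀..T, ψp ξ / ξ)
        + (-(n * R * T * Real.log (1 - b * n)))
        + (a T * n / (2 * Real.sqrt 2 * b)) *
            Real.log ((1 + (1 - Real.sqrt 2) * b * n) / (1 + (1 + Real.sqrt 2) * b * n))) :
    ConcaveOn ℝ (Set.Ioi (0 : ℝ)) G := by
  have hψ : ψp = fun ξ => α₀ + α₁ * ξ + α₂ * ξ ^ 2 + α₃ * ξ ^ 3 := funext hψp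
  have hψc : Continuous ψp := by rw [hψ]; fun_prop
  have hs2 : 0 < Real.sqrt 2 := by positivity
  have hbn0 : 0 < b * n := by positivity
  have hs2' : Real.sqrt 2 < 2 := by
    rw [Real.sqrt_lt' (by norm_num)]; norm_num
  set L := Real.log ((1 + (1 - Real.sqrt 2) * b * n) / (1 + (1 + Real.sqrt 2) * b * n)) with hL
  have hnum : 0 < 1 + (1 - Real.sqrt 2) * b * n := by nlinarith
  have hden : 0 < 1 + (1 + Real.sqrt 2) * b * n := by nlinarith
  have hL0 : L ≤ 0 := by
    apply Real.log_nonpos (by positivity)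
    rw [div_le_one hden]
    nlinarith
  set C : ℝ := 0.45724 * (R ^ 2 * Tc ^ 2 / Pc) with hC
  have hC0 : 0 ≤ C := by positivity
  set K : ℝ := n / (2 * Real.sqrt 2 * b) * L with hK
  have hK0 : K ≤ 0 := mul_nonpos_of_nonneg_of_nonpos (by positivity) hL0
  set Lb := Real.log (1 - b * n) with hLb
  -- the smooth part
  set F : ℝ → ℝ := fun T => (n * ϑ₀
          + n * (α₀ * (T - T₀) + α₁ * (T ^ 2 - T₀ ^ 2) / 2
              + α₂ * (T ^ 3 - T₀ ^ 3) / 3 + α₃ * (T ^ 4 - T₀ ^ 4) / 4)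
          - n * R * (T - T₀)
          - n * R * T * (Real.log (P₀ / (n * R)) - Real.log T)
          - n * T * ∫ ξ in T₀..T, ψp ξ / ξ)
        - n * R * T * Lb + K * C * ((1 + m) ^ 2 + m ^ 2 * (T / Tc)) with hF
  set F' : ℝ → ℝ := fun T => - n * R * (Real.log (P₀ / (n * R)) - Real.log T)
      - n * (∫ ξ in T₀..T, ψp ξ / ξ) - n * R * Lb + K * C * (m ^ 2 / Tc) with hF'
  have hI : ∀ T : ℝ, 0 < T → HasDerivAt (fun T => ∫ ξ in T₀..T, ψp ξ / ξ) (ψp T / T) T := by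
    intro T hT
    have hco : ContinuousOn (fun ξ => ψp ξ / ξ) (Set.Ioi 0) :=
      hψc.continuousOn.div continuousOn_id (fun x hx => ne_of_gt hx)
    apply intervalIntegral.integral_hasDerivAt_right
    · apply ContinuousOn.intervalIntegrable
      apply hco.mono
      intro x hx
      have := (Set.mem_uIcc.1 hx)
      rcases this with h | h
      · exact lt_of_lt_of_le hT₀ h.1
      · exact lt_of_lt_of_le hT h.1
    · exact hco.stronglyMeasurableAtFilter isOpen_Ioi T hT
    · exact hco.continuousAt (isOpen_Ioi.mem_nhds hT)
  have hd1 : ∀ T : ℝ, 0 < T → HasDerivAt F (F' T) T := by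
    intro T hT
    have hid := hasDerivAt_id' T
    have hlog := (Real.hasDerivAt_log hT.ne').const_sub (Real.log (P₀ / (n * R)))
    have h1 := (((((hid.sub_const T₀).const_mul α₀).add
      ((((hasDerivAt_pow 2 T).sub_const (T₀ ^ 2)).const_mul α₁).div_const 2)).add
      ((((hasDerivAt_pow 3 T).sub_const (T₀ ^ 3)).const_mul α₂).div_const 3)).add
      ((((hasDerivAt_pow 4 T).sub_const (T₀ ^ 4)).const_mul α₃).div_const 4))
    have h2 := ((((((h1.const_mul n).const_add (n * ϑ₀)).sub
      ((hid.sub_const T₀).const_mul (n * R))).sub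
      ((hid.const_mul (n * R)).mul hlog)).sub ((hid.const_mul n).mul (hI T hT))).sub
      ((hid.const_mul (n * R)).mul_const Lb)).add
      ((((hid.div_const Tc).const_mul (m ^ 2)).const_add ((1 + m) ^ 2)).const_mul (K * C))
    refine h2.congr_deriv ?_
    simp only [hF', hψp]
    have := hT.ne'
    field_simp
    push_cast
    ring
  have hd2 : ∀ T : ℝ, 0 < T → HasDerivAt F' (n * (R - ψp T) / T) T := by
    intro T hT
    have hlog := (Real.hasDerivAt_log hT.ne').const_sub (Real.log (P₀ / (n * R)))
    have h2 := (((hlog.const_mul (- n * R)).sub ((hI T hT).const_mul n)).sub_const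
      (n * R * Lb)).add_const (K * C * (m ^ 2 / Tc))
    refine h2.congr_deriv ?_
    have := hT.ne'
    field_simp
  have hFc : ConcaveOn ℝ (Set.Ioi (0 : ℝ)) F := by
    apply concaveOn_of_hasDerivWithinAt2_nonpos (convex_Ioi 0)
      (f' := F') (f'' := fun T => n * (R - ψp T) / T)
    · exact fun x hx => (hd1 x hx).continuousAt.continuousWithinAt
    · rw [interior_Ioi]
      exact fun x hx => (hd1 x hx).hasDerivWithinAt
    · rw [interior_Ioi]
      exact fun x hx => (hd2 x hx).hasDerivWithinAt
    · rw [interior_Ioi]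
      intro x hx
      have h := hψpR x hx
      exact div_nonpos_of_nonpos_of_nonneg
        (mul_nonpos_of_nonneg_of_nonpos hn.le (by linarith)) (le_of_lt hx)
  have hS : ConcaveOn ℝ (Set.Ioi (0 : ℝ)) Real.sqrt :=
    Real.strictConcaveOn_sqrt.concaveOn.subset Set.Ioi_subset_Ici_self (convex_Ioi 0)
  have hc : 0 ≤ -(K * C) * (2 * m * (1 + m) / Real.sqrt Tc) := by
    apply mul_nonneg
    · have := mul_nonpos_of_nonpos_of_nonneg hK0 hC0
      linarith
    · positivity
  refine (hFc.add (hS.smul hc)).congr ?_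
  intro T hT
  have hT0 : 0 < T := hT
  rw [hG T hT0, ha]
  have hlogs : Real.log (P₀ / (n * R * T)) = Real.log (P₀ / (n * R)) - Real.log T := by
    rw [← div_div, Real.log_div (by positivity) hT0.ne']
  have hsq : Real.sqrt (T / Tc) ^ 2 = T / Tc := Real.sq_sqrt (by positivity)
  have hsd : Real.sqrt (T / Tc) = Real.sqrt T / Real.sqrt Tc := Real.sqrt_div hT0.le _
  have hexp : (1 + m * (1 - Real.sqrt (T / Tc))) ^ 2
      = (1 + m) ^ 2 + m ^ 2 * (T / Tc) - 2 * m * (1 + m) * (Real.sqrt T / Real.sqrt Tc) := by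
    rw [← hsd]; linear_combination m ^ 2 * hsq
  rw [hlogs, hexp]
  simp only [Pi.add_apply, smul_eq_mul, hF, hK]
  ring
end

section
/- Let R, P_c, T_c > 0, m ≥ 0, b > 0, β₁, β₂ ∈ ℝ, and let a(T) = 0.45724·(R²T_c²/P_c)·(1 + m(1 − √(T/T_c)))² and c(T) = a(T)·b^{2/3}·(β₁(1 − T/T_c) + β₂). Suppose T > 0 satisfies 1 + m(1 − √(T/T_c)) ≠ 0 and the condition (1 + m)(β₁(1 − T_r) + β₂) + 4β₁T_r(1 + m(1 − √T_r)) ≤ 0, where T_r = T/T_c. Then c''(T) ≤ 0. In particular, if this condition holds for every T in an open interval I ⊆ (0, ∞) on which 1 + m(1 − √(T/T_c)) ≠ 0, then c is concave on I. -/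
/-- Under condition `(1+m)(β₁(1−T_r)+β₂) + 4β₁T_r(1+m(1−√T_r)) ≤ 0` the influence
parameter satisfies `c''(T) ≤ 0`; in particular, if this holds on an open
interval `I ⊆ (0, ∞)` on which `1 + m(1 − √(T/T_c)) ≠ 0`, then `c` is concave
on `I`. -/
theorem influence_parameter_concave
    (R Pc Tc m b β₁ β₂ : ℝ)
    (hR : 0 < R) (hPc : 0 < Pc) (hTc : 0 < Tc) (hm : 0 ≤ m) (hb : 0 < b)
    (a c : ℝ → ℝ)
    (ha : ∀ T : ℝ,
      a T = 0.45724 * (R ^ 2 * Tc ^ 2 / Pc) * (1 + m * (1 - Real.sqrt (T / Tc))) ^ 2)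
    (hc : ∀ T : ℝ, c T = a T * b ^ ((2 : ℝ) / 3) * (β₁ * (1 - T / Tc) + β₂)) :
    (∀ T : ℝ, 0 < T → 1 + m * (1 - Real.sqrt (T / Tc)) ≠ 0 →
      (1 + m) * (β₁ * (1 - T / Tc) + β₂)
          + 4 * β₁ * (T / Tc) * (1 + m * (1 - Real.sqrt (T / Tc))) ≤ 0 →
      deriv (deriv c) T ≤ 0) ∧
    (∀ lo hi : ℝ, Set.Ioo lo hi ⊆ Set.Ioi (0 : ℝ) →
      (∀ T ∈ Set.Ioo lo hi, 1 + m * (1 - Real.sqrt (T / Tc)) ≠ 0) →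
      (∀ T ∈ Set.Ioo lo hi,
        (1 + m) * (β₁ * (1 - T / Tc) + β₂)
            + 4 * β₁ * (T / Tc) * (1 + m * (1 - Real.sqrt (T / Tc))) ≤ 0) →
      ConcaveOn ℝ (Set.Ioo lo hi) c) := by
  obtain ⟨K, hK0, hcK⟩ : ∃ K : ℝ, 0 ≤ K ∧ ∀ T, c T =
      K * ((1 + m * (1 - Real.sqrt (T / Tc))) ^ 2 * (β₁ * (1 - T / Tc) + β₂)) := by
    refine ⟨0.45724 * (R ^ 2 * Tc ^ 2 / Pc) * b ^ ((2 : ℝ) / 3), by positivity, fun T => ?_⟩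
    rw [hc, ha]; ring
  have hcf : c = fun T =>
      K * ((1 + m * (1 - Real.sqrt (T / Tc))) ^ 2 * (β₁ * (1 - T / Tc) + β₂)) := funext hcK
  have hx : ∀ T : ℝ, HasDerivAt (fun T => T / Tc) (1 / Tc) T := fun T =>
    (hasDerivAt_id T).div_const Tc
  have hs : ∀ T : ℝ, 0 < T → HasDerivAt (fun T => Real.sqrt (T / Tc))
      (1 / Tc / (2 * Real.sqrt (T / Tc))) T := fun T hT => (hx T).sqrt (by positivity)
  have hu : ∀ T : ℝ, 0 < T → HasDerivAt (fun T => 1 + m * (1 - Real.sqrt (T / Tc)))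
      (m * (-(1 / Tc / (2 * Real.sqrt (T / Tc))))) T := fun T hT =>
    (((hs T hT).const_sub 1).const_mul m).const_add 1
  have hL : ∀ T : ℝ, HasDerivAt (fun T => β₁ * (1 - T / Tc) + β₂) (β₁ * (-(1 / Tc))) T :=
    fun T => (((hx T).const_sub 1).const_mul β₁).add_const β₂
  have h1 : ∀ T : ℝ, 0 < T → HasDerivAt c
      (K / Tc * (-m * ((1 + m * (1 - Real.sqrt (T / Tc))) / Real.sqrt (T / Tc)
        * (β₁ * (1 - T / Tc) + β₂)) - β₁ * (1 + m * (1 - Real.sqrt (T / Tc))) ^ 2)) T := by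
    intro T hT
    have hpos : 0 < Real.sqrt (T / Tc) := Real.sqrt_pos.2 (by positivity)
    rw [hcf]
    refine ((((hu T hT).pow 2).mul (hL T)).const_mul K).congr_deriv ?_
    simp only [Pi.pow_apply]
    generalize Real.sqrt (T / Tc) = s at *
    field_simp
    push_cast
    ring
  have h2 : ∀ T : ℝ, 0 < T → HasDerivAt (deriv c)
      (K / Tc ^ 2 * (m / (2 * Real.sqrt (T / Tc) ^ 3)) * ((1 + m) * (β₁ * (1 - T / Tc) + β₂)
          + 4 * β₁ * (T / Tc) * (1 + m * (1 - Real.sqrt (T / Tc))))) T := by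
    intro T hT
    have hpos : 0 < Real.sqrt (T / Tc) := Real.sqrt_pos.2 (by positivity)
    have hsq : T / Tc = Real.sqrt (T / Tc) ^ 2 := (Real.sq_sqrt (by positivity)).symm
    have hev : deriv c =ᶠ[nhds T] fun T =>
      (K / Tc * (-m * ((1 + m * (1 - Real.sqrt (T / Tc))) / Real.sqrt (T / Tc)
        * (β₁ * (1 - T / Tc) + β₂)) - β₁ * (1 + m * (1 - Real.sqrt (T / Tc))) ^ 2)) := by
      filter_upwards [lt_mem_nhds hT] with y hy using (h1 y hy).deriv
    refine HasDerivAt.congr_of_eventuallyEq ?_ hev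
    refine ((((((hu T hT).div (hs T hT) hpos.ne').mul (hL T)).const_mul (-m)).sub
      (((hu T hT).pow 2).const_mul β₁)).const_mul (K / Tc)).congr_deriv ?_
    simp only [Pi.pow_apply, Pi.div_apply]
    generalize Real.sqrt (T / Tc) = s at *
    rw [hsq]
    field_simp
    push_cast
    ring
  have h3 : ∀ T : ℝ, 0 < T → (1 + m) * (β₁ * (1 - T / Tc) + β₂)
          + 4 * β₁ * (T / Tc) * (1 + m * (1 - Real.sqrt (T / Tc))) ≤ 0 →
      deriv (deriv c) T ≤ 0 := by
    intro T hT h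
    rw [(h2 T hT).deriv]
    exact mul_nonpos_of_nonneg_of_nonpos (by positivity) h
  refine ⟨fun T hT _ h => h3 T hT h, fun lo hi hI _ h => ?_⟩
  refine concaveOn_of_deriv2_nonpos (convex_Ioo lo hi)
    (fun T hT => (h1 T (hI hT)).continuousAt.continuousWithinAt) ?_ ?_ ?_
  · rw [interior_Ioo]
    exact fun T hT => (h1 T (hI hT)).differentiableAt.differentiableWithinAt
  · rw [interior_Ioo]
    exact fun T hT => (h2 T (hI hT)).differentiableAt.differentiableWithinAt
  · rw [interior_Ioo]
    exact fun T hT => h3 T (hI hT) (h T hT)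
end

section
/- Let d ≥ 1, let f_b : ℝ × ℝ → ℝ and c : ℝ → ℝ be smooth (C^∞), and let n, T : ℝ^d → ℝ be smooth. Define μ_b(x) = ∂₁f_b(n(x),T(x)), γ_b(x) = ∂₂f_b(n(x),T(x)), p_b = n·μ_b − f_b(n,T); the chemical potential μ = μ_b − ∇·(c(T)∇n); the pressure p = p_b − n·∇·(c(T)∇n) − (1/2)c(T)|∇n|²; and γ = γ_b + (1/2)c'(T)|∇n|². Then at every x ∈ ℝ^d and for each component j ∈ {1,…,d}: n(x)·∂_j μ(x) − γ(x)·∂_j T(x) = ∂_j p(x) + ∑_{i=1}^{d} ∂_i( c(T)·∂_i n·∂_j n )(x); that is, n∇μ − γ∇T = ∇p + ∇·(c(T)(∇n ⊗ ∇n)). -/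
/-- The relation `n∇μ − γ∇T = ∇p + ∇·(c(T)(∇n ⊗ ∇n))` associating the pressure
gradient with the gradients of temperature and chemical potential, stated
componentwise with `pd i f x = ∂_i f(x)` on `ℝ^d`. -/
theorem pressure_chemical_potential_gradient_relation
    (d : ℕ) (hd : 1 ≤ d)
    (fb : ℝ → ℝ → ℝ) (hfb : ContDiff ℝ (⊤ : ℕ∞) (fun q : ℝ × ℝ => fb q.1 q.2))
    (c : ℝ → ℝ) (hc : ContDiff ℝ (⊤ : ℕ∞) c)
    (n T : EuclideanSpace ℝ (Fin d) → ℝ)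
    (hn : ContDiff ℝ (⊤ : ℕ∞) n) (hT : ContDiff ℝ (⊤ : ℕ∞) T)
    (pd : Fin d → (EuclideanSpace ℝ (Fin d) → ℝ) → EuclideanSpace ℝ (Fin d) → ℝ)
    (hpd : ∀ (i : Fin d) (f : EuclideanSpace ℝ (Fin d) → ℝ) x,
      pd i f x = fderiv ℝ f x (EuclideanSpace.single i 1))
    (μb γb pb μ p γ : EuclideanSpace ℝ (Fin d) → ℝ)
    (hμb : ∀ x, μb x = deriv (fun s => fb s (T x)) (n x))
    (hγb : ∀ x, γb x = deriv (fun s => fb (n x) s) (T x))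
    (hpb : ∀ x, pb x = n x * μb x - fb (n x) (T x))
    (hμ : ∀ x, μ x = μb x - ∑ i : Fin d, pd i (fun y => c (T y) * pd i n y) x)
    (hp : ∀ x, p x = pb x - n x * (∑ i : Fin d, pd i (fun y => c (T y) * pd i n y) x)
      - (1 / 2) * c (T x) * ∑ i : Fin d, (pd i n x) ^ 2)
    (hγ : ∀ x, γ x = γb x + (1 / 2) * deriv c (T x) * ∑ i : Fin d, (pd i n x) ^ 2) :
    ∀ (x : EuclideanSpace ℝ (Fin d)) (j : Fin d),
      n x * pd j μ x - γ x * pd j T x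
        = pd j p x + ∑ i : Fin d, pd i (fun y => c (T y) * pd i n y * pd j n y) x := by
  intro x j
  have hpd' : ∀ (i : Fin d) (f : EuclideanSpace ℝ (Fin d) → ℝ),
      pd i f = fun x => fderiv ℝ f x (EuclideanSpace.single i 1) :=
    fun i f => funext (hpd i f)
  have top1 : ((⊤ : ℕ∞) : WithTop ℕ∞) ≠ 0 := by simp
  have smooth_pd : ∀ (i : Fin d) (f : EuclideanSpace ℝ (Fin d) → ℝ),
      ContDiff ℝ (⊤ : ℕ∞) f → ContDiff ℝ (⊤ : ℕ∞) (pd i f) := by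
    intro i f hf
    rw [hpd']
    exact (hf.fderiv_right (m := (⊤ : ℕ∞)) (by simp)).clm_apply contDiff_const
  have pd_mul : ∀ (i : Fin d) (f g : EuclideanSpace ℝ (Fin d) → ℝ) (y),
      ContDiff ℝ (⊤ : ℕ∞) f → ContDiff ℝ (⊤ : ℕ∞) g →
      pd i (fun y => f y * g y) y = f y * pd i g y + g y * pd i f y := by
    intro i f g y hf hg
    simp only [hpd]
    rw [fderiv_fun_mul (hf.differentiable top1 y) (hg.differentiable top1 y)]
    simp
  have pd_sub : ∀ (i : Fin d) (f g : EuclideanSpace ℝ (Fin d) → ℝ) (y),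
      ContDiff ℝ (⊤ : ℕ∞) f → ContDiff ℝ (⊤ : ℕ∞) g →
      pd i (fun y => f y - g y) y = pd i f y - pd i g y := by
    intro i f g y hf hg
    simp only [hpd]
    rw [fderiv_fun_sub (hf.differentiable top1 y) (hg.differentiable top1 y)]
    simp
  have pd_sum : ∀ (i : Fin d) (f : Fin d → EuclideanSpace ℝ (Fin d) → ℝ) (y),
      (∀ k, ContDiff ℝ (⊤ : ℕ∞) (f k)) →
      pd i (fun y => ∑ k, f k y) y = ∑ k, pd i (f k) y := by
    intro i f y hf
    simp only [hpd]
    rw [fderiv_fun_sum (fun k _ => (hf k).differentiable top1 y)]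
    simp
  have pd_comm : ∀ (i k : Fin d), pd i (pd k n) x = pd k (pd i n) x := by
    intro i k
    have h2 : DifferentiableAt ℝ (fderiv ℝ n) x :=
      ((hn.fderiv_right (m := (⊤ : ℕ∞)) (by simp)).differentiable top1) x
    have hs : IsSymmSndFDerivAt ℝ n x :=
      hn.contDiffAt.isSymmSndFDerivAt (by simp; exact WithTop.coe_le_coe.2 (le_top : (2 : ℕ∞) ≤ ⊤))
    have key : ∀ a b : Fin d, pd a (pd b n) x =
        fderiv ℝ (fderiv ℝ n) x (EuclideanSpace.single a 1) (EuclideanSpace.single b 1) := by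
      intro a b
      rw [hpd, hpd' b n, fderiv_clm_apply h2 (differentiableAt_const _)]
      simp
    rw [key, key]
    exact hs _ _
  have hcT : ContDiff ℝ (⊤ : ℕ∞) (fun y => c (T y)) := hc.comp hT
  have pd_c : pd j (fun y => c (T y)) x = deriv c (T x) * pd j T x := by
    have h := ((hc.differentiable top1 (T x)).hasDerivAt).comp_hasFDerivAt x
      (hT.differentiable top1 x).hasFDerivAt
    rw [hpd, hpd]
    have h' := h.fderiv
    simp only [Function.comp_def] at h'
    rw [h']
    simp
  have hF : ∀ q : ℝ × ℝ, HasFDerivAt (fun q : ℝ × ℝ => fb q.1 q.2)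
      (fderiv ℝ (fun q : ℝ × ℝ => fb q.1 q.2) q) q :=
    fun q => (hfb.differentiable top1 q).hasFDerivAt
  have hμb' : μb = fun x => fderiv ℝ (fun q : ℝ × ℝ => fb q.1 q.2) (n x, T x) (1, 0) := by
    funext y
    rw [hμb]
    exact ((hF (n y, T y)).comp_hasDerivAt (n y)
      ((hasDerivAt_id (n y)).prodMk (hasDerivAt_const (n y) (T y)))).deriv
  have hγb' : γb x = fderiv ℝ (fun q : ℝ × ℝ => fb q.1 q.2) (n x, T x) (0, 1) := by
    rw [hγb]
    exact ((hF (n x, T x)).comp_hasDerivAt (T x)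
      ((hasDerivAt_const (T x) (n x)).prodMk (hasDerivAt_id (T x)))).deriv
  have sμb : ContDiff ℝ (⊤ : ℕ∞) μb := by
    rw [hμb']
    exact ((hfb.fderiv_right (m := (⊤ : ℕ∞)) (by simp)).comp (hn.prodMk hT)).clm_apply
      contDiff_const
  have sfb : ContDiff ℝ (⊤ : ℕ∞) (fun y => fb (n y) (T y)) := hfb.comp (hn.prodMk hT)
  have pd_fb : pd j (fun y => fb (n y) (T y)) x = μb x * pd j n x + γb x * pd j T x := by
    have h := (hF (n x, T x)).comp x ((hn.differentiable top1 x).hasFDerivAt.prodMk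
      (hT.differentiable top1 x).hasFDerivAt)
    have h' := h.fderiv
    simp only [Function.comp_def] at h'
    rw [hpd, h', hγb', hμb', hpd, hpd]
    set L := fderiv ℝ (fun q : ℝ × ℝ => fb q.1 q.2) (n x, T x)
    set a := fderiv ℝ n x (EuclideanSpace.single j 1) with ha
    set b := fderiv ℝ T x (EuclideanSpace.single j 1) with hb
    have e : ((a, b) : ℝ × ℝ) = a • ((1, 0) : ℝ × ℝ) + b • ((0, 1) : ℝ × ℝ) := by simp
    change L (a, b) = _
    rw [e, map_add, map_smul, map_smul, smul_eq_mul, smul_eq_mul]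
    ring
  have sflux : ∀ i, ContDiff ℝ (⊤ : ℕ∞) (fun y => c (T y) * pd i n y) :=
    fun i => hcT.mul (smooth_pd i n hn)
  have sdiv : ContDiff ℝ (⊤ : ℕ∞)
      (fun y => ∑ i : Fin d, pd i (fun y => c (T y) * pd i n y) y) :=
    ContDiff.sum (fun i _ => smooth_pd i _ (sflux i))
  have sμ : ContDiff ℝ (⊤ : ℕ∞) μ := by
    rw [funext hμ]
    exact sμb.sub sdiv
  have ssq : ∀ i, ContDiff ℝ (⊤ : ℕ∞) (fun y => pd i n y * pd i n y) :=
    fun i => (smooth_pd i n hn).mul (smooth_pd i n hn)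
  have sS : ContDiff ℝ (⊤ : ℕ∞) (fun y => ∑ i : Fin d, pd i n y * pd i n y) :=
    ContDiff.sum (fun i _ => ssq i)
  have sh : ContDiff ℝ (⊤ : ℕ∞) (fun y => (1 / 2 : ℝ) * c (T y)) := contDiff_const.mul hcT
  have pd_h : pd j (fun y => (1 / 2 : ℝ) * c (T y)) x = 1 / 2 * (deriv c (T x) * pd j T x) := by
    rw [pd_mul j (fun _ => (1 / 2 : ℝ)) _ x contDiff_const hcT, pd_c]
    simp [hpd]
  have hp' : p = fun y => (n y * μ y - fb (n y) (T y))
      - ((1 / 2) * c (T y)) * ∑ i : Fin d, pd i n y * pd i n y := by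
    funext y
    rw [hp, hpb, hμ]
    simp only [sq]
    ring
  have pd_p : pd j p x = n x * pd j μ x + μ x * pd j n x - (μb x * pd j n x + γb x * pd j T x)
      - ((1 / 2) * c (T x) * (∑ i, 2 * (pd i n x * pd j (pd i n) x))
        + (∑ i : Fin d, pd i n x * pd i n x) * (1 / 2 * (deriv c (T x) * pd j T x))) := by
    rw [hp', pd_sub j _ _ x ((hn.mul sμ).sub sfb) (sh.mul sS),
      pd_sub j _ _ x (hn.mul sμ) sfb, pd_mul j n μ x hn sμ, pd_fb,
      pd_mul j _ _ x sh sS, pd_h, pd_sum j _ x ssq]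
    congr 4
    funext i
    rw [pd_mul j _ _ x (smooth_pd i n hn) (smooth_pd i n hn)]
    ring
  have hlast : ∑ i : Fin d, pd i (fun y => c (T y) * pd i n y * pd j n y) x
      = c (T x) * (∑ i, pd i n x * pd j (pd i n) x)
        + pd j n x * ∑ i : Fin d, pd i (fun y => c (T y) * pd i n y) x := by
    rw [Finset.mul_sum, Finset.mul_sum, ← Finset.sum_add_distrib]
    refine Finset.sum_congr rfl fun i _ => ?_
    rw [pd_mul i _ _ x (sflux i) (smooth_pd j n hn), pd_comm i j]
    ring
  rw [pd_p, hlast, hγ, hμ x, ← Finset.mul_sum]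
  simp only [sq]
  ring
end

section
/- Let d ≥ 1, let f_b : ℝ × ℝ → ℝ and c : ℝ → ℝ be smooth, and let n, T : ℝ × ℝ^d → ℝ and u : ℝ × ℝ^d → ℝ^d be smooth, satisfying the mass conservation equation ∂n/∂t + ∇·(nu) = 0 at every point. Define (at each (t,x)) μ_b = ∂₁f_b(n,T), γ_b = ∂₂f_b(n,T), μ = μ_b − ∇·(c(T)∇n), γ = γ_b + (1/2)c'(T)|∇n|², and the Helmholtz free energy density f = f_b(n,T) + (1/2)c(T)|∇n|². Then at every point: ∂f/∂t = γ·∂T/∂t − μ·∇·(nu) − ∇·( (∇·(un))·c(T)∇n ), where all spatial operators act on the x-variable. -/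
theorem fet_two : (2 : WithTop ℕ∞) ≤ ((⊤ : ℕ∞) : WithTop ℕ∞) :=
  WithTop.coe_le_coe.mpr (le_top : (2 : ℕ∞) ≤ ⊤)

theorem fet_swap {E : Type*} [NormedAddCommGroup E] [NormedSpace ℝ E] (n : E → ℝ)
    (hn : ContDiff ℝ (⊤ : ℕ∞) n) (v w q : E) :
    fderiv ℝ (fun r => fderiv ℝ n r v) q w = fderiv ℝ (fun r => fderiv ℝ n r w) q v := by
  have hd : DifferentiableAt ℝ (fderiv ℝ n) q :=
    ((hn.fderiv_right (m := 1) (by rw [one_add_one_eq_two]; exact fet_two)).differentiable (by norm_num)) q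
  have hs : IsSymmSndFDerivAt ℝ n q :=
    hn.contDiffAt.isSymmSndFDerivAt (by simpa using fet_two)
  rw [fderiv_clm_apply hd (by fun_prop), fderiv_clm_apply hd (by fun_prop)]
  simpa using hs w v

theorem fet_diff {E : Type*} [NormedAddCommGroup E] [NormedSpace ℝ E] (n : E → ℝ)
    (hn : ContDiff ℝ (⊤ : ℕ∞) n) (v : E) :
    Differentiable ℝ (fun r => fderiv ℝ n r v) := by
  have hd : Differentiable ℝ (fderiv ℝ n) :=
    ((hn.fderiv_right (m := 1) (by rw [one_add_one_eq_two]; exact fet_two)).differentiable (by norm_num))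
  fun_prop

theorem fet_chain {E : Type*} [NormedAddCommGroup E] [NormedSpace ℝ E] (fb : ℝ → ℝ → ℝ)
    (hfb : Differentiable ℝ (fun q : ℝ × ℝ => fb q.1 q.2)) (n T : E → ℝ)
    (hn : Differentiable ℝ n) (hT : Differentiable ℝ T) (q v : E) :
    fderiv ℝ (fun r => fb (n r) (T r)) q v =
      deriv (fun s => fb s (T q)) (n q) * fderiv ℝ n q v +
      deriv (fun s => fb (n q) s) (T q) * fderiv ℝ T q v := by
  have hF := (hfb (n q, T q)).hasFDerivAt
  set L := fderiv ℝ (fun q : ℝ × ℝ => fb q.1 q.2) (n q, T q) with hL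
  have h1 : HasDerivAt (fun s => fb s (T q)) (L (1, 0)) (n q) :=
    HasFDerivAt.comp_hasDerivAt (f := fun s => (s, T q)) (n q) hF
      ((hasDerivAt_id (n q)).prodMk (hasDerivAt_const (n q) (T q)))
  have h2 : HasDerivAt (fun s => fb (n q) s) (L (0, 1)) (T q) :=
    HasFDerivAt.comp_hasDerivAt (f := fun s => (n q, s)) (T q) hF
      ((hasDerivAt_const (T q) (n q)).prodMk (hasDerivAt_id (T q)))
  have h3 : HasFDerivAt (fun r => fb (n r) (T r))
      (L.comp ((fderiv ℝ n q).prod (fderiv ℝ T q))) q :=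
    HasFDerivAt.comp (f := fun r => (n r, T r)) q hF
      ((hn q).hasFDerivAt.prodMk (hT q).hasFDerivAt)
  rw [h1.deriv, h2.deriv, h3.fderiv]
  have : ((fderiv ℝ n q v, fderiv ℝ T q v) : ℝ × ℝ) =
      fderiv ℝ n q v • ((1, 0) : ℝ × ℝ) + fderiv ℝ T q v • ((0, 1) : ℝ × ℝ) := by simp
  simp only [ContinuousLinearMap.comp_apply, ContinuousLinearMap.prod_apply]
  rw [this, map_add, map_smul, map_smul]
  simp [mul_comm]

theorem fet_mul {E : Type*} [NormedAddCommGroup E] [NormedSpace ℝ E] (a b : E → ℝ)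
    (ha : Differentiable ℝ a) (hb : Differentiable ℝ b) (q v : E) :
    fderiv ℝ (fun r => a r * b r) q v = a q * fderiv ℝ b q v + b q * fderiv ℝ a q v := by
  rw [fderiv_fun_mul (ha q) (hb q)]; simp

/-- Transport of the Helmholtz free energy density: if `∂n/∂t + ∇·(nu) = 0`,
then `∂f/∂t = γ ∂T/∂t − μ∇·(nu) − ∇·((∇·(un)) c(T)∇n)`, stated componentwise
on `ℝ × ℝ^d` with `dt` the time derivative and `pd i` the `i`-th spatial
partial derivative. -/
theorem free_energy_transport
    (d : ℕ) (hd : 1 ≤ d)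
    (fb : ℝ → ℝ → ℝ) (hfb : ContDiff ℝ (⊤ : ℕ∞) (fun q : ℝ × ℝ => fb q.1 q.2))
    (c : ℝ → ℝ) (hc : ContDiff ℝ (⊤ : ℕ∞) c)
    (n T : ℝ × EuclideanSpace ℝ (Fin d) → ℝ)
    (hn : ContDiff ℝ (⊤ : ℕ∞) n) (hT : ContDiff ℝ (⊤ : ℕ∞) T)
    (u : Fin d → ℝ × EuclideanSpace ℝ (Fin d) → ℝ)
    (hu : ∀ j : Fin d, ContDiff ℝ (⊤ : ℕ∞) (u j))
    (dt : (ℝ × EuclideanSpace ℝ (Fin d) → ℝ) → ℝ × EuclideanSpace ℝ (Fin d) → ℝ)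
    (hdt : ∀ (g : ℝ × EuclideanSpace ℝ (Fin d) → ℝ) q,
      dt g q = fderiv ℝ g q (1, 0))
    (pd : Fin d → (ℝ × EuclideanSpace ℝ (Fin d) → ℝ) → ℝ × EuclideanSpace ℝ (Fin d) → ℝ)
    (hpd : ∀ (i : Fin d) (g : ℝ × EuclideanSpace ℝ (Fin d) → ℝ) q,
      pd i g q = fderiv ℝ g q (0, EuclideanSpace.single i 1))
    (mass : ∀ q, dt n q + ∑ i : Fin d, pd i (fun r => n r * u i r) q = 0)
    (μb γb μ γ f : ℝ × EuclideanSpace ℝ (Fin d) → ℝ)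
    (hμb : ∀ q, μb q = deriv (fun s => fb s (T q)) (n q))
    (hγb : ∀ q, γb q = deriv (fun s => fb (n q) s) (T q))
    (hμ : ∀ q, μ q = μb q - ∑ i : Fin d, pd i (fun r => c (T r) * pd i n r) q)
    (hγ : ∀ q, γ q = γb q + (1 / 2) * deriv c (T q) * ∑ i : Fin d, (pd i n q) ^ 2)
    (hf : ∀ q, f q = fb (n q) (T q) + (1 / 2) * c (T q) * ∑ i : Fin d, (pd i n q) ^ 2) :
    ∀ q,
      dt f q = γ q * dt T q - μ q * (∑ i : Fin d, pd i (fun r => n r * u i r) q)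
        - ∑ j : Fin d,
            pd j (fun r =>
              (∑ i : Fin d, pd i (fun s => u i s * n s) r) * c (T r) * pd j n r) q := by
  intro q
  have hc1 : Differentiable ℝ c := hc.differentiable (by simp)
  have hn1 : Differentiable ℝ n := hn.differentiable (by simp)
  have hT1 : Differentiable ℝ T := hT.differentiable (by simp)
  have hfb1 := hfb.differentiable (by simp)
  have hcT : Differentiable ℝ (fun r => c (T r)) := hc1.comp hT1
  have hdtn : Differentiable ℝ (dt n) := by
    rw [show dt n = fun r => fderiv ℝ n r (1, 0) from funext (hdt n)]
    exact fet_diff n hn _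
  have hpdn : ∀ i, Differentiable ℝ (pd i n) := by
    intro i
    rw [show pd i n = fun r => fderiv ℝ n r (0, EuclideanSpace.single i 1) from funext (hpd i n)]
    exact fet_diff n hn _
  have hsw : ∀ i, pd i (dt n) q = dt (pd i n) q := by
    intro i
    rw [hpd, hdt, show dt n = fun r => fderiv ℝ n r (1, 0) from funext (hdt n),
      show pd i n = fun r => fderiv ℝ n r (0, EuclideanSpace.single i 1) from funext (hpd i n)]
    exact fet_swap n hn _ _ q
  have hm : ∀ r, (∑ i : Fin d, pd i (fun s => n s * u i s) r) = - dt n r := by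
    intro r; linarith [mass r]
  have hm' : ∀ r, (∑ i : Fin d, pd i (fun s => u i s * n s) r) = - dt n r := by
    intro r; rw [← hm r]; simp only [mul_comm]
  have hflux : ∀ j, pd j (fun r =>
      (∑ i : Fin d, pd i (fun s => u i s * n s) r) * c (T r) * pd j n r) q =
      - (dt n q * pd j (fun r => c (T r) * pd j n r) q
        + c (T q) * (pd j n q * dt (pd j n) q)) := by
    intro j
    have e : (fun r => (∑ i : Fin d, pd i (fun s => u i s * n s) r) * c (T r) * pd j n r)
        = fun r => (- dt n r) * (c (T r) * pd j n r) := by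
      funext r; rw [hm' r]; ring
    rw [e, hpd, fet_mul (fun r => - dt n r) (fun r => c (T r) * pd j n r) hdtn.neg
      (hcT.mul (hpdn j)), ← hpd, fderiv_fun_neg, neg_apply, ← hpd, hsw]
    ring
  have hcTd : dt (fun r => c (T r)) q = deriv c (T q) * dt T q := by
    rw [hdt, hdt]
    have := ((hc1 (T q)).hasDerivAt.comp_hasFDerivAt q (hT1 q).hasFDerivAt).fderiv
    have e : (fun r => c (T r)) = c ∘ T := rfl
    rw [e, this]; simp
  have hS : Differentiable ℝ (fun r => ∑ i : Fin d, (pd i n r) ^ 2) := by fun_prop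
  have hSd : dt (fun r => ∑ i : Fin d, (pd i n r) ^ 2) q
      = 2 * ∑ i : Fin d, pd i n q * dt (pd i n) q := by
    rw [hdt, fderiv_fun_sum (A := fun i r => pd i n r ^ 2) (fun i _ => ((hpdn i).pow 2) q), ContinuousLinearMap.sum_apply,
      Finset.mul_sum]
    refine Finset.sum_congr rfl fun i _ => ?_
    rw [show (fun r => pd i n r ^ 2) = fun r => pd i n r * pd i n r from by funext r; ring,
      fet_mul _ _ (hpdn i) (hpdn i), hdt]
    ring
  have hfd : dt f q = μb q * dt n q + γb q * dt T q
      + (1 / 2) * (c (T q) * dt (fun r => ∑ i : Fin d, (pd i n r) ^ 2) q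
        + (∑ i : Fin d, (pd i n q) ^ 2) * dt (fun r => c (T r)) q) := by
    have e : f = fun r => fb (n r) (T r)
        + (1 / 2) * (c (T r) * ∑ i : Fin d, (pd i n r) ^ 2) := by
      funext r; rw [hf r]; ring
    have hA : Differentiable ℝ (fun r => fb (n r) (T r)) :=
      Differentiable.comp (g := fun q : ℝ × ℝ => fb q.1 q.2) hfb1 (hn1.prodMk hT1)
    have hB : Differentiable ℝ (fun r => c (T r) * ∑ i : Fin d, (pd i n r) ^ 2) := hcT.mul hS
    rw [e, hdt, fderiv_fun_add (hA q) ((hB q).const_mul _), add_apply,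
      fet_chain fb hfb1 n T hn1 hT1, fderiv_const_mul (hB q), smul_apply,
      fet_mul _ _ hcT hS, hμb, hγb]
    simp only [hdt, smul_eq_mul]
  rw [hfd, hcTd, hSd, hm, hμ, hγ, Finset.sum_congr rfl (fun j _ => hflux j),
    Finset.sum_neg_distrib, Finset.sum_add_distrib, ← Finset.mul_sum, ← Finset.mul_sum]
  ring
end

section
/- Let I, J ⊆ ℝ be intervals and let g, h : ℝ × ℝ → ℝ be differentiable functions such that: (i) for each fixed T ∈ J, the map n ↦ g(n,T) is convex on I and the map n ↦ h(n,T) is concave on I; and (ii) for each fixed n ∈ I, the map T ↦ g(n,T) + h(n,T) is concave on J. Set f = g + h. Then for all n₀, n₁ ∈ I and T₀, T₁ ∈ J: f(n₁,T₁) − f(n₀,T₀) ≤ ( ∂₁g(n₁,T₁) + ∂₁h(n₀,T₁) )·(n₁ − n₀) + ∂₂f(n₀,T₀)·(T₁ − T₀), where ∂₁ and ∂₂ denote the partial derivatives with respect to the first and second arguments. -/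
theorem convex_tangent_le {S : Set ℝ} {f : ℝ → ℝ} (hf : ConvexOn ℝ S f) {x y : ℝ}
    (hx : x ∈ S) (hy : y ∈ S) (hd : DifferentiableAt ℝ f x) :
    deriv f x * (y - x) ≤ f y - f x := by
  rcases lt_trichotomy x y with hxy | hxy | hxy
  · have h1 := hf.le_slope_of_hasDerivAt hx hy hxy hd.hasDerivAt
    rw [slope_def_field, le_div_iff₀ (by linarith)] at h1
    exact h1
  · subst hxy
    simp
  · have h1 := hf.slope_le_of_hasDerivAt hy hx hxy hd.hasDerivAt
    rw [slope_def_field, div_le_iff₀ (by linarith)] at h1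
    linarith

theorem concave_le_tangent {S : Set ℝ} {f : ℝ → ℝ} (hf : ConcaveOn ℝ S f) {x y : ℝ}
    (hx : x ∈ S) (hy : y ∈ S) (hd : DifferentiableAt ℝ f x) :
    f y - f x ≤ deriv f x * (y - x) := by
  have h1 := convex_tangent_le hf.neg hx hy hd.neg
  rw [deriv.neg] at h1
  simp only [Pi.neg_apply] at h1
  linarith

/-- Two-variable convex–concave splitting inequality: if `n ↦ g(n,T)` is convex
and `n ↦ h(n,T)` is concave on `I` for each `T ∈ J`, and `T ↦ g(n,T) + h(n,T)`
is concave on `J` for each `n ∈ I`, then with `f = g + h`,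
`f(n₁,T₁) − f(n₀,T₀) ≤ (∂₁g(n₁,T₁) + ∂₁h(n₀,T₁))(n₁−n₀) + ∂₂f(n₀,T₀)(T₁−T₀)`. -/
theorem convex_concave_splitting_inequality
    (I J : Set ℝ) (hI : Convex ℝ I) (hJ : Convex ℝ J)
    (g h : ℝ × ℝ → ℝ) (hg : Differentiable ℝ g) (hh : Differentiable ℝ h)
    (hgconv : ∀ T ∈ J, ConvexOn ℝ I (fun s => g (s, T)))
    (hhconc : ∀ T ∈ J, ConcaveOn ℝ I (fun s => h (s, T)))
    (hfconc : ∀ n ∈ I, ConcaveOn ℝ J (fun s => g (n, s) + h (n, s))) :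
    ∀ n₀ ∈ I, ∀ n₁ ∈ I, ∀ T₀ ∈ J, ∀ T₁ ∈ J,
      (g (n₁, T₁) + h (n₁, T₁)) - (g (n₀, T₀) + h (n₀, T₀))
        ≤ (deriv (fun s => g (s, T₁)) n₁ + deriv (fun s => h (s, T₁)) n₀) * (n₁ - n₀)
          + deriv (fun s => g (n₀, s) + h (n₀, s)) T₀ * (T₁ - T₀) := by
  intro n₀ hn₀ n₁ hn₁ T₀ hT₀ T₁ hT₁
  have a := convex_tangent_le (hgconv T₁ hT₁) hn₁ hn₀ (by fun_prop)
  have b := concave_le_tangent (hhconc T₁ hT₁) hn₀ hn₁ (by fun_prop)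
  have c := concave_le_tangent (hfconc n₀ hn₀) hT₀ hT₁ (by fun_prop)
  linarith
end
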